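/- The split composite likelihood ratio test controls the Type I error at level a for all sample sizes: for every n ∈ ℕ and a ∈ (0,1), sup_{θ*∈Θ_0} Pr_{θ*}(V_{α,β,n}^0 > 1/a) ≤ a. -/

import Mathlib

open MeasureTheory ENNReal
open scoped BigOperators Classical

noncomputable section

/-- Division in `ℝ≥0∞` with the convention that the ratio is `0` when the
denominator is `0`. -/
def safeDiv (a b : ℝ≥0∞) : ℝ≥0∞ := if b = 0 then 0 else a / b

variable {d : ℕ} {π : Fin d → Type*} [∀ i, MeasurableSpace (π i)]

/-- The marginal density on the coordinates in `S`, obtained by integrating a density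
out over the coordinates in `[d] \ S` (as a function of the full vector, depending only
on the coordinates in `S`). -/
def marginal (μ : ∀ i, Measure (π i)) (S : Finset (Fin d))
    (f : (∀ i, π i) → ℝ≥0∞) : (∀ i, π i) → ℝ≥0∞ :=
  MeasureTheory.lmarginal μ Sᶜ f

/-- The conditional density of the coordinates in `T1` given the coordinates in `T2`,
with the convention that the ratio is `0` when the denominator is `0`. -/
def condDens (μ : ∀ i, Measure (π i)) (T1 T2 : Finset (Fin d))
    (f : (∀ i, π i) → ℝ≥0∞) (x : ∀ i, π i) : ℝ≥0∞ :=
  safeDiv (marginal μ (T1 ∪ T2) f x) (marginal μ T2 f x)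

/-- `𝕊_d`: the nonempty subsets of `[d]`. -/
abbrev Sd (d : ℕ) := {S : Finset (Fin d) // S.Nonempty}

/-- `𝕋_d`: ordered pairs of disjoint nonempty subsets of `[d]`. -/
abbrev Td (d : ℕ) := {T : Finset (Fin d) × Finset (Fin d) //
  T.1.Nonempty ∧ T.2.Nonempty ∧ Disjoint T.1 T.2}

/-- The individual composite likelihood
`p_{α,β}(x;θ) = ∏_S p_S(x_S;θ)^(α_S/γ) ∏_T p(x_{T←}|x_{T→};θ)^(β_T/γ)`,
where `f = p(·;θ)` is the joint density. -/
def compLik (μ : ∀ i, Measure (π i)) (α : Sd d → ℝ) (β : Td d → ℝ) (γ : ℝ)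
    (f : (∀ i, π i) → ℝ≥0∞) (x : ∀ i, π i) : ℝ≥0∞ :=
  (∏ S : Sd d, marginal μ S.1 f x ^ (α S / γ)) *
  (∏ T : Td d, condDens μ T.1.1 T.1.2 f x ^ (β T / γ))

/-!
The ratio of the composite likelihoods of two densities is, under the law of the denominator,
an e-variable: a nonnegative statistic of expectation at most one. For a marginal this is Fubini.
For the conditional of `x_A` given `x_B` it is the marginal case applied to the hybrid density
which has the `B`-marginal of the true density `q` and the conditional law given `x_B` of its
competitor `r`. Hölder's inequality then gives the weighted geometric mean of these ratios.
E-variables multiply over independent observations and stay e-variables when the competitor is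
chosen from independent data, so Markov's inequality applies; replacing the true parameter by a
maximizer in the denominator only makes the statistic smaller.
-/

section ENNReal

lemma safeDiv_le_div (a b : ℝ≥0∞) : safeDiv a b ≤ a / b := by
  unfold safeDiv
  split_ifs <;> simp

lemma measurable_safeDiv {E : Type*} [MeasurableSpace E] {f g : E → ℝ≥0∞}
    (hf : Measurable f) (hg : Measurable g) : Measurable fun x => safeDiv (f x) (g x) :=
  Measurable.ite (hg (measurableSet_singleton 0)) measurable_const (hf.div hg)

lemma prod_div_prod_le_prod_div {ι : Type*} {s : Finset ι} {f g : ι → ℝ≥0∞}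
    (hfg : ∀ i ∈ s, f i / g i ≠ ∞) :
    (∏ i ∈ s, f i) / ∏ i ∈ s, g i ≤ ∏ i ∈ s, f i / g i := by
  by_cases hg : ∀ i ∈ s, g i ≠ 0
  · exact (ENNReal.prod_div_distrib_of_ne_zero hg).ge
  · push Not at hg
    obtain ⟨i, hi, hgi⟩ := hg
    have hfi : f i = 0 := by
      by_contra hfi
      exact hfg i hi (by rw [hgi, ENNReal.div_zero hfi])
    simp [Finset.prod_eq_zero hi hfi]

lemma prod_rpow_div_prod_rpow_le {ι : Type*} {s : Finset ι} {f g : ι → ℝ≥0∞} {w : ι → ℝ}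
    (hw : ∀ i ∈ s, 0 ≤ w i) (hfg : ∀ i ∈ s, f i / g i ≠ ∞) :
    (∏ i ∈ s, f i ^ w i) / ∏ i ∈ s, g i ^ w i ≤ ∏ i ∈ s, (f i / g i) ^ w i := by
  have div_rpow : ∀ i ∈ s, (f i / g i) ^ w i = f i ^ w i / g i ^ w i :=
    fun i hi => ENNReal.div_rpow_of_nonneg _ _ (hw i hi)
  rw [Finset.prod_congr rfl div_rpow]
  refine prod_div_prod_le_prod_div fun i hi => ?_
  rw [← div_rpow i hi]
  exact ENNReal.rpow_ne_top_of_nonneg (hw i hi) (hfg i hi)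

end ENNReal

/-- `f` is an e-variable for `P`: a nonnegative statistic whose expectation under `P` is at
most one. Large values of `f` are evidence against `P`. -/
structure IsEVariable {E : Type*} [MeasurableSpace E] (f : E → ℝ≥0∞) (P : Measure E) : Prop where
  measurable : Measurable f
  lintegral_le_one : ∫⁻ x, f x ∂P ≤ 1

namespace IsEVariable

variable {E F ι : Type*} [MeasurableSpace E] [MeasurableSpace F] [Fintype ι]
  {P : Measure E} {f g : E → ℝ≥0∞}

lemma ae_ne_top (hf : IsEVariable f P) : ∀ᵐ x ∂P, f x ≠ ∞ :=
  (ae_lt_top hf.measurable (hf.lintegral_le_one.trans_lt one_lt_top).ne).mono fun _ h => h.ne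

lemma mono_ae (hg : IsEVariable g P) (hf : Measurable f) (hfg : f ≤ᵐ[P] g) : IsEVariable f P :=
  ⟨hf, (lintegral_mono_ae hfg).trans hg.lintegral_le_one⟩

lemma prod_rpow {h : ι → E → ℝ≥0∞} (hh : ∀ i, IsEVariable (h i) P) {w : ι → ℝ}
    (hw : ∀ i, 0 ≤ w i) (hw1 : ∑ i, w i = 1) : IsEVariable (fun x => ∏ i, h i x ^ w i) P where
  measurable := Finset.measurable_prod _ fun i _ => (hh i).measurable.pow_const _
  lintegral_le_one :=
    calc ∫⁻ x, ∏ i, h i x ^ w i ∂P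
        ≤ ∏ i, (∫⁻ x, h i x ∂P) ^ w i :=
          ENNReal.lintegral_prod_norm_pow_le _ (fun i _ => (hh i).measurable.aemeasurable) hw1
            fun i _ => hw i
      _ ≤ 1 := Finset.prod_le_one' fun i _ =>
          ENNReal.rpow_le_one (hh i).lintegral_le_one (hw i)

lemma pi_prod {E : ι → Type*} [∀ i, MeasurableSpace (E i)] {P : ∀ i, Measure (E i)}
    [∀ i, IsProbabilityMeasure (P i)] {h : ∀ i, E i → ℝ≥0∞} (hh : ∀ i, IsEVariable (h i) (P i)) :
    IsEVariable (fun x => ∏ i, h i (x i)) (Measure.pi P) where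
  measurable := Finset.measurable_prod _ fun i _ =>
    (hh i).measurable.comp (measurable_pi_apply i)
  lintegral_le_one := by
    rw [ProbabilityTheory.lintegral_prod_eq_prod_lintegral_of_indepFun Finset.univ
      (fun i (x : ∀ i, E i) => h i (x i))
      (ProbabilityTheory.iIndepFun_pi fun i => (hh i).measurable.aemeasurable)
      fun i => (hh i).measurable.comp (measurable_pi_apply i)]
    refine Finset.prod_le_one' fun i _ => ?_
    rw [(measurePreserving_eval P i).lintegral_comp (hh i).measurable]
    exact (hh i).lintegral_le_one

lemma prod_of_forall_section [SFinite P] {ν : Measure F} [IsProbabilityMeasure ν]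
    {h : E × F → ℝ≥0∞} (hh : Measurable h) (hsec : ∀ y, IsEVariable (fun x => h (x, y)) P) :
    IsEVariable h (P.prod ν) where
  measurable := hh
  lintegral_le_one :=
    calc ∫⁻ z, h z ∂(P.prod ν)
        = ∫⁻ y, ∫⁻ x, h (x, y) ∂P ∂ν := lintegral_prod_symm' _ hh
      _ ≤ ∫⁻ _, 1 ∂ν := lintegral_mono fun y => (hsec y).lintegral_le_one
      _ = 1 := by simp

lemma comp_of_map {X : F → E} {ν : Measure F} (hf : IsEVariable f (ν.map X))
    (hX : Measurable X) : IsEVariable (fun y => f (X y)) ν :=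
  ⟨hf.measurable.comp hX, (lintegral_map hf.measurable hX).ge.trans hf.lintegral_le_one⟩

lemma measure_one_div_lt_le (hf : IsEVariable f P) (a : ℝ≥0∞) : P {x | 1 / a < f x} ≤ a := by
  have markov : 1 / a * P {x | 1 / a ≤ f x} ≤ 1 :=
    (mul_meas_ge_le_lintegral₀ hf.measurable.aemeasurable _).trans hf.lintegral_le_one
  calc P {x | 1 / a < f x}
      ≤ P {x | 1 / a ≤ f x} := measure_mono fun x (hx : 1 / a < f x) => hx.le
    _ ≤ (1 / a)⁻¹ := by rwa [ENNReal.le_inv_iff_mul_le, mul_comm]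
    _ = a := by simp

end IsEVariable

lemma isProbabilityMeasure_withDensity {E : Type*} [MeasurableSpace E] {μ : Measure E}
    {f : E → ℝ≥0∞} (hf : ∫⁻ x, f x ∂μ = 1) : IsProbabilityMeasure (μ.withDensity f) :=
  ⟨by rw [withDensity_apply _ .univ, Measure.restrict_univ, hf]⟩

section Split

variable {E F Θ Ω ι : Type*} [MeasurableSpace E] [MeasurableSpace F] [MeasurableSpace Θ]
  [MeasurableSpace Ω] [Fintype ι] {Q : Measure E} [IsProbabilityMeasure Q]

lemma isEVariable_prod_div_prod {f g : E → ℝ≥0∞} (hf : Measurable f) (hg : Measurable g)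
    (hfg : IsEVariable (fun x => f x / g x) Q) :
    IsEVariable (fun x : ι → E => (∏ j, f (x j)) / ∏ j, g (x j)) (Measure.pi fun _ => Q) := by
  refine (IsEVariable.pi_prod fun _ => hfg).mono_ae (by fun_prop) ?_
  have ratios_ne_top : ∀ᵐ x : ι → E ∂Measure.pi fun _ => Q, ∀ j, f (x j) / g (x j) ≠ ∞ :=
    ae_all_iff.2 fun j =>
      (Measure.tendsto_eval_ae_ae (μ := fun _ => Q) (i := j)).eventually hfg.ae_ne_top
  filter_upwards [ratios_ne_top] with x hx
  exact prod_div_prod_le_prod_div fun j _ => hx j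

lemma measure_one_div_lt_splitRatio_le {ℓ : Θ → E → ℝ≥0∞} (hℓ : Measurable (Function.uncurry ℓ))
    {θ₀ : Θ} (hratio : ∀ θ, IsEVariable (fun x => ℓ θ x / ℓ θ₀ x) Q)
    {Pr : Measure Ω} {ν : Measure F} [IsProbabilityMeasure ν] {X : ι → Ω → E} {Y : Ω → F}
    (hX : ∀ j, Measurable (X j)) (hY : Measurable Y)
    (hlaw : Pr.map (fun ω => (fun j => X j ω, Y ω)) = (Measure.pi fun _ => Q).prod ν)
    {t : F → Θ} (ht : Measurable t) {L : Ω → ℝ≥0∞} (hL : ∀ ω, ∏ j, ℓ θ₀ (X j ω) ≤ L ω)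
    (a : ℝ≥0∞) :
    Pr {ω | 1 / a < safeDiv (∏ j, ℓ (t (Y ω)) (X j ω)) (L ω)} ≤ a := by
  let ratio : (ι → E) × F → ℝ≥0∞ := fun z => (∏ j, ℓ (t z.2) (z.1 j)) / ∏ j, ℓ θ₀ (z.1 j)
  have measurable_ratio : Measurable ratio := by
    refine .div (Finset.measurable_prod _ fun j _ => ?_) (Finset.measurable_prod _ fun j _ => ?_)
    · exact hℓ.comp (f := fun z : (ι → E) × F => (t z.2, z.1 j)) (by fun_prop)
    · exact hℓ.comp (f := fun z : (ι → E) × F => (θ₀, z.1 j)) (by fun_prop)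
  have ratio_prod : IsEVariable ratio ((Measure.pi fun _ => Q).prod ν) :=
    .prod_of_forall_section measurable_ratio fun y =>
      isEVariable_prod_div_prod hℓ.of_uncurry_left hℓ.of_uncurry_left (hratio (t y))
  have ratio_sample : IsEVariable (fun ω => ratio (fun j => X j ω, Y ω)) Pr :=
    .comp_of_map (hlaw ▸ ratio_prod) (by fun_prop)
  refine (measure_mono fun ω hω => ?_).trans (ratio_sample.measure_one_div_lt_le a)
  calc 1 / a < safeDiv (∏ j, ℓ (t (Y ω)) (X j ω)) (L ω) := hω
    _ ≤ (∏ j, ℓ (t (Y ω)) (X j ω)) / L ω := safeDiv_le_div _ _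
    _ ≤ ratio (fun j => X j ω, Y ω) := ENNReal.div_le_div_left (hL ω) _

end Split

section LMarginal

variable {ι : Type*} [DecidableEq ι] {E : ι → Type*} [∀ i, MeasurableSpace (E i)]
  (μ : ∀ i, Measure (E i)) (s : Finset ι) {f g h : (∀ i, E i) → ℝ≥0∞}

lemma dependsOn_lmarginal (f : (∀ i, E i) → ℝ≥0∞) :
    DependsOn (lmarginal μ s f) (s : Set ι)ᶜ :=
  fun _ _ hxy => lmarginal_congr μ f hxy

lemma lmarginal_mul_of_dependsOn (hf : Measurable f) (hg : DependsOn g (s : Set ι)ᶜ)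
    (x : ∀ i, E i) :
    lmarginal μ s (fun x => f x * g x) x = lmarginal μ s f x * g x := by
  have g_updateFinset : ∀ y, g (Function.updateFinset x s y) = g x := fun y =>
    hg fun i hi => by
      simp [Function.updateFinset, show i ∉ s from hi]
  simp only [lmarginal, g_updateFinset]
  exact lintegral_mul_const _ (hf.comp measurable_updateFinset)

lemma lintegral_mul_le_of_lmarginal_mul_le [Fintype ι] [∀ i, SigmaFinite (μ i)]
    (hf : Measurable f) (hg : Measurable g) (hh : Measurable h)
    (hg_dep : DependsOn g (s : Set ι)ᶜ)
    (hle : ∀ x, lmarginal μ s f x * g x ≤ lmarginal μ s h x) :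
    ∫⁻ x, f x * g x ∂Measure.pi μ ≤ ∫⁻ x, h x ∂Measure.pi μ :=
  lintegral_le_of_lmarginal_le s (hf.mul hg) hh fun x =>
    (lmarginal_mul_of_dependsOn μ s hf hg_dep x).trans_le (hle x)

end LMarginal

section Densities

variable (μ : ∀ i, Measure (π i)) {q r : (∀ i, π i) → ℝ≥0∞}

lemma dependsOn_marginal (S : Finset (Fin d)) (f : (∀ i, π i) → ℝ≥0∞) :
    DependsOn (marginal μ S f) (S : Set (Fin d)) := by
  simpa [marginal] using dependsOn_lmarginal μ Sᶜ f

/-- The `B`-marginal of `q` together with the conditional law under `r` of the other coordinates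
given those in `B`. -/
def hybridDensity (B : Finset (Fin d)) (q r : (∀ i, π i) → ℝ≥0∞) (x : ∀ i, π i) : ℝ≥0∞ :=
  r x * (marginal μ B q x / marginal μ B r x)

lemma marginal_hybridDensity {B S : Finset (Fin d)} (hBS : B ⊆ S) (hr : Measurable r)
    (x : ∀ i, π i) :
    marginal μ S (hybridDensity μ B q r) x
      = marginal μ S r x * (marginal μ B q x / marginal μ B r x) := by
  refine lmarginal_mul_of_dependsOn μ Sᶜ hr ?_ x
  intro x y hxy
  have hxy : ∀ i ∈ (B : Set (Fin d)), x i = y i := fun i hi => hxy i (by simpa using hBS hi)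
  simp only [dependsOn_marginal μ B _ hxy]

variable [∀ i, SigmaFinite (μ i)]

lemma measurable_marginal (S : Finset (Fin d)) (hq : Measurable q) :
    Measurable (marginal μ S q) :=
  hq.lmarginal μ

lemma measurable_condDens (A B : Finset (Fin d)) (hq : Measurable q) :
    Measurable (condDens μ A B q) :=
  measurable_safeDiv (measurable_marginal μ _ hq) (measurable_marginal μ _ hq)

lemma lintegral_mul_marginal_div_le (S : Finset (Fin d)) (hq : Measurable q) (hr : Measurable r) :
    ∫⁻ x, q x * (marginal μ S r x / marginal μ S q x) ∂Measure.pi μ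
      ≤ ∫⁻ x, r x ∂Measure.pi μ := by
  refine lintegral_mul_le_of_lmarginal_mul_le μ Sᶜ hq
    ((measurable_marginal μ S hr).div (measurable_marginal μ S hq)) hr ?_
    fun x => ENNReal.mul_div_le
  intro x y hxy
  have hxy : ∀ i ∈ (S : Set (Fin d)), x i = y i := by simpa using hxy
  simp only [dependsOn_marginal μ S _ hxy]

lemma isEVariable_marginal_div (S : Finset (Fin d)) (hq : Measurable q) (hr : Measurable r)
    (hr1 : ∫⁻ x, r x ∂Measure.pi μ ≤ 1) :
    IsEVariable (fun x => marginal μ S r x / marginal μ S q x)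
      ((Measure.pi μ).withDensity q) := by
  have hratio : Measurable fun x => marginal μ S r x / marginal μ S q x :=
    (measurable_marginal μ S hr).div (measurable_marginal μ S hq)
  refine ⟨hratio, ?_⟩
  rw [lintegral_withDensity_eq_lintegral_mul _ hq hratio]
  exact (lintegral_mul_marginal_div_le μ S hq hr).trans hr1

lemma ae_marginal_ne_zero_and_ne_top (S : Finset (Fin d)) (hq : Measurable q)
    (hq_fin : ∫⁻ x, q x ∂Measure.pi μ ≠ ∞) :
    ∀ᵐ x ∂(Measure.pi μ).withDensity q, marginal μ S q x ≠ 0 ∧ marginal μ S q x ≠ ∞ := by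
  -- `∞ · 1_{q_S ∈ {0, ∞}}` has finite expectation because multiplying `q_S` by it does not
  -- increase `q_S`.
  let penalty : ℝ≥0∞ → ℝ≥0∞ := Set.indicator {0, ∞} fun _ => ∞
  have measurable_penalty : Measurable fun x => penalty (marginal μ S q x) :=
    (measurable_const.indicator (Set.toFinite _).measurableSet).comp (measurable_marginal μ S hq)
  have mul_penalty_le : ∀ c, c * penalty c ≤ c := by
    intro c
    by_cases hc : c ∈ ({0, ∞} : Set ℝ≥0∞)
    · rcases hc with rfl | rfl <;> simp
    · simp [penalty, hc]
  have lintegral_penalty_le :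
      ∫⁻ x, penalty (marginal μ S q x) ∂(Measure.pi μ).withDensity q
        ≤ ∫⁻ x, q x ∂Measure.pi μ := by
    rw [lintegral_withDensity_eq_lintegral_mul _ hq measurable_penalty]
    refine lintegral_mul_le_of_lmarginal_mul_le μ Sᶜ hq measurable_penalty hq ?_
      fun x => mul_penalty_le _
    exact fun x y hxy => congrArg penalty (dependsOn_marginal μ S q (by simpa using hxy))
  filter_upwards [ae_lt_top measurable_penalty (lintegral_penalty_le.trans_lt hq_fin.lt_top).ne]
    with x hx
  by_contra hx_mem
  simp [penalty, show marginal μ S q x = 0 ∨ marginal μ S q x = ∞ by tauto] at hx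

lemma measurable_hybridDensity (B : Finset (Fin d)) (hq : Measurable q) (hr : Measurable r) :
    Measurable (hybridDensity μ B q r) :=
  hr.mul ((measurable_marginal μ B hq).div (measurable_marginal μ B hr))

lemma lintegral_hybridDensity_le (B : Finset (Fin d)) (hq : Measurable q) (hr : Measurable r) :
    ∫⁻ x, hybridDensity μ B q r x ∂Measure.pi μ ≤ ∫⁻ x, q x ∂Measure.pi μ :=
  lintegral_mul_marginal_div_le μ B hr hq

lemma isEVariable_condDens_div (A B : Finset (Fin d)) (hq : Measurable q) (hr : Measurable r)
    (hq1 : ∫⁻ x, q x ∂Measure.pi μ ≤ 1) :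
    IsEVariable (fun x => condDens μ A B r x / condDens μ A B q x)
      ((Measure.pi μ).withDensity q) := by
  refine (isEVariable_marginal_div μ (A ∪ B) hq (measurable_hybridDensity μ B hq hr)
    ((lintegral_hybridDensity_le μ B hq hr).trans hq1)).mono_ae
    ((measurable_condDens μ A B hr).div (measurable_condDens μ A B hq)) ?_
  filter_upwards [ae_marginal_ne_zero_and_ne_top μ B hq (hq1.trans_lt one_lt_top).ne]
    with x ⟨hB_zero, hB_top⟩
  calc condDens μ A B r x / condDens μ A B q x
      = condDens μ A B r x * (marginal μ B q x / marginal μ (A ∪ B) q x) := by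
        rw [condDens.eq_1 μ A B q, safeDiv, if_neg hB_zero, div_eq_mul_inv,
          ENNReal.inv_div (.inl hB_top) (.inl hB_zero)]
    _ ≤ marginal μ (A ∪ B) r x / marginal μ B r x
          * (marginal μ B q x / marginal μ (A ∪ B) q x) := by
        gcongr
        exact safeDiv_le_div _ _
    _ = marginal μ (A ∪ B) (hybridDensity μ B q r) x / marginal μ (A ∪ B) q x := by
        rw [marginal_hybridDensity μ Finset.subset_union_right hr]
        simp only [div_eq_mul_inv]
        ring

end Densities

section CompositeLikelihood

variable (μ : ∀ i, Measure (π i)) (α : Sd d → ℝ) (β : Td d → ℝ) (γ : ℝ)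

/-- The marginal and conditional densities entering the composite likelihood, as one family. -/
def compFactor (f : (∀ i, π i) → ℝ≥0∞) : Sd d ⊕ Td d → (∀ i, π i) → ℝ≥0∞ :=
  Sum.elim (fun S => marginal μ S.1 f) (fun T => condDens μ T.1.1 T.1.2 f)

/-- The normalized weights `α_S / γ` and `β_T / γ`, as one family. -/
def compWeight : Sd d ⊕ Td d → ℝ :=
  Sum.elim (fun S => α S / γ) (fun T => β T / γ)

lemma compLik_eq_prod_compFactor_rpow (f : (∀ i, π i) → ℝ≥0∞) (x : ∀ i, π i) :
    compLik μ α β γ f x = ∏ k, compFactor μ f k x ^ compWeight α β γ k := by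
  simp [compLik, compFactor, compWeight, Fintype.prod_sum_type]

variable {α β γ}

lemma compWeight_nonneg (hα : ∀ S, 0 ≤ α S) (hβ : ∀ T, 0 ≤ β T) (hγ : 0 ≤ γ) :
    ∀ k, 0 ≤ compWeight α β γ k
  | .inl S => div_nonneg (hα S) hγ
  | .inr T => div_nonneg (hβ T) hγ

lemma sum_compWeight (hγ : γ = ∑ S, α S + ∑ T, β T) (hγ_ne : γ ≠ 0) :
    ∑ k, compWeight α β γ k = 1 := by
  simp only [compWeight, Fintype.sum_sum_type, Sum.elim_inl, Sum.elim_inr]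
  rw [← Finset.sum_div, ← Finset.sum_div, ← add_div, ← hγ, div_self hγ_ne]

variable [∀ i, SigmaFinite (μ i)]

lemma isEVariable_compFactor_div {q r : (∀ i, π i) → ℝ≥0∞} (hq : Measurable q)
    (hr : Measurable r) (hq1 : ∫⁻ x, q x ∂Measure.pi μ ≤ 1)
    (hr1 : ∫⁻ x, r x ∂Measure.pi μ ≤ 1) :
    ∀ k, IsEVariable (fun x => compFactor μ r k x / compFactor μ q k x)
      ((Measure.pi μ).withDensity q)
  | .inl S => isEVariable_marginal_div μ S.1 hq hr hr1
  | .inr T => isEVariable_condDens_div μ T.1.1 T.1.2 hq hr hq1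

variable (α β γ) in
lemma measurable_compLik {f : (∀ i, π i) → ℝ≥0∞} (hf : Measurable f) :
    Measurable (compLik μ α β γ f) :=
  (Finset.measurable_prod _ fun S _ => (measurable_marginal μ S.1 hf).pow_const _).mul
    (Finset.measurable_prod _ fun T _ => (measurable_condDens μ T.1.1 T.1.2 hf).pow_const _)

lemma isEVariable_compLik_div (hα : ∀ S, 0 ≤ α S) (hβ : ∀ T, 0 ≤ β T)
    (hγ : γ = ∑ S, α S + ∑ T, β T) (hγ_pos : 0 < γ) {q r : (∀ i, π i) → ℝ≥0∞}
    (hq : Measurable q) (hr : Measurable r) (hq1 : ∫⁻ x, q x ∂Measure.pi μ ≤ 1)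
    (hr1 : ∫⁻ x, r x ∂Measure.pi μ ≤ 1) :
    IsEVariable (fun x => compLik μ α β γ r x / compLik μ α β γ q x)
      ((Measure.pi μ).withDensity q) := by
  have hw := compWeight_nonneg hα hβ hγ_pos.le
  have factor_ratio := isEVariable_compFactor_div μ hq hr hq1 hr1
  refine (IsEVariable.prod_rpow factor_ratio hw (sum_compWeight hγ hγ_pos.ne')).mono_ae
    ((measurable_compLik μ α β γ hr).div (measurable_compLik μ α β γ hq)) ?_
  filter_upwards [ae_all_iff.2 fun k => (factor_ratio k).ae_ne_top] with x hx
  simp only [compLik_eq_prod_compFactor_rpow]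
  exact prod_rpow_div_prod_rpow_le (fun k _ => hw k) fun k _ => hx k

section Family

variable {Θ : Type*} [MeasurableSpace Θ] {p : Θ → (∀ i, π i) → ℝ≥0∞}

lemma measurable_uncurry_marginal (S : Finset (Fin d)) (hp : Measurable (Function.uncurry p)) :
    Measurable (Function.uncurry fun θ => marginal μ S (p θ)) :=
  Measurable.lintegral_prod_right <| hp.comp <|
    (measurable_fst.comp measurable_fst).prodMk <| measurable_updateFinset'.comp <|
      (measurable_snd.comp measurable_fst).prodMk measurable_snd

variable (α β γ) in
lemma measurable_uncurry_compLik (hp : Measurable (Function.uncurry p)) :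
    Measurable (Function.uncurry fun θ => compLik μ α β γ (p θ)) := by
  have marginals := fun S => measurable_uncurry_marginal μ S hp
  exact (Finset.measurable_prod _ fun S _ => (marginals S.1).pow_const _).mul
    (Finset.measurable_prod _ fun T _ =>
      (measurable_safeDiv (marginals (T.1.1 ∪ T.1.2)) (marginals T.1.2)).pow_const _)

end Family

end CompositeLikelihood

theorem split_CLRT_type_I_error_general
    (μ : ∀ i, Measure (π i)) [∀ i, SigmaFinite (μ i)]
    {Θ : Type*} [MeasurableSpace Θ] {p : Θ → (∀ i, π i) → ℝ≥0∞}
    (hp_meas : Measurable (Function.uncurry p))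
    (hp_prob : ∀ θ : Θ, ∫⁻ x, p θ x ∂(Measure.pi μ) = 1)
    {α : Sd d → ℝ} {β : Td d → ℝ} (hα : ∀ S, 0 ≤ α S) (hβ : ∀ T, 0 ≤ β T)
    {γ : ℝ} (hγ : γ = ∑ S, α S + ∑ T, β T) (hγpos : 0 < γ)
    {Ω F ι : Type*} [MeasurableSpace Ω] [MeasurableSpace F] [Fintype ι]
    {Pr : Measure Ω} {ν : Measure F} [IsProbabilityMeasure ν]
    {θstar : Θ} {X : ι → Ω → (∀ i, π i)} {Y : Ω → F}
    (hX : ∀ j, Measurable (X j)) (hY : Measurable Y)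
    (hlaw : Pr.map (fun ω => (fun j => X j ω, Y ω))
      = (Measure.pi fun _ => (Measure.pi μ).withDensity (p θstar)).prod ν)
    {t : F → Θ} (ht : Measurable t) {θhat : Ω → Θ}
    (hθhat : ∀ ω, ∏ j, compLik μ α β γ (p θstar) (X j ω)
      ≤ ∏ j, compLik μ α β γ (p (θhat ω)) (X j ω))
    (a : ℝ≥0∞) :
    Pr {ω | 1 / a < safeDiv
        (∏ j, compLik μ α β γ (p (t (Y ω))) (X j ω))
        (∏ j, compLik μ α β γ (p (θhat ω)) (X j ω))}
      ≤ a := by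
  have : IsProbabilityMeasure ((Measure.pi μ).withDensity (p θstar)) :=
    isProbabilityMeasure_withDensity (hp_prob θstar)
  exact measure_one_div_lt_splitRatio_le (measurable_uncurry_compLik μ α β γ hp_meas)
    (fun θ => isEVariable_compLik_div μ hα hβ hγ hγpos hp_meas.of_uncurry_left
      hp_meas.of_uncurry_left (hp_prob θstar).le (hp_prob θ).le)
    hX hY hlaw ht hθhat a

/-- The split composite likelihood ratio test controls the Type I
error at level `a` for all sample sizes: for every `n ∈ ℕ` and `a ∈ (0,1)`,
`sup_{θ*∈Θ₀} Pr_{θ*}(V_{α,β,n}^0 > 1/a) ≤ a`. -/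
theorem split_CLRT_type_I_error
    {d : ℕ} (hd : 1 ≤ d)
    {π : Fin d → Type*} [∀ i, MeasurableSpace (π i)]
    (μ : ∀ i, Measure (π i)) [∀ i, SigmaFinite (μ i)]
    {Θ : Type*} [MeasurableSpace Θ]
    (p : Θ → (∀ i, π i) → ℝ≥0∞)
    (hp_meas : Measurable (Function.uncurry p))
    (hp_prob : ∀ θ : Θ, ∫⁻ x, p θ x ∂(Measure.pi μ) = 1)
    (α : Sd d → ℝ) (β : Td d → ℝ)
    (hα : ∀ S, 0 ≤ α S) (hβ : ∀ T, 0 ≤ β T)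
    (γ : ℝ) (hγ : γ = ∑ S, α S + ∑ T, β T) (hγpos : 0 < γ)
    {Ω : Type*} [MeasurableSpace Ω]
    (Pr : Measure Ω) [IsProbabilityMeasure Pr]
    (θstar : Θ) (n : ℕ)
    -- the two halves `X_n^0` and `X_n^1` of the i.i.d. sample of size `2n`
    (X0 X1 : Fin n → Ω → (∀ i, π i))
    (hX0 : ∀ j, Measurable (X0 j)) (hX1 : ∀ j, Measurable (X1 j))
    -- the `2n` observations are i.i.d. with density `p(·;θ*)` w.r.t. `μ`
    (hlaw : Measure.map (fun ω => (fun j => X0 j ω, fun j => X1 j ω)) Pr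
      = (Measure.pi fun _ : Fin n => (Measure.pi μ).withDensity (p θstar)).prod
          (Measure.pi fun _ : Fin n => (Measure.pi μ).withDensity (p θstar)))
    -- the estimators `θ̃_n^0`, `θ̃_n^1` are measurable functions of `X_n^0`, `X_n^1` alone
    (t0 t1 : (Fin n → ∀ i, π i) → Θ)
    (ht0 : Measurable t0) (ht1 : Measurable t1)
    -- null hypothesis parameter space and maximum composite likelihood estimators over `Θ₀`
    (Θ0 : Set Θ)
    (θhat0 θhat1 : Ω → Θ)
    (hθhat0_meas : @Measurable Ω Θ
      (MeasurableSpace.comap (fun ω => fun j => X0 j ω)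
        (inferInstance : MeasurableSpace (Fin n → ∀ i, π i))) _ θhat0)
    (hθhat1_meas : @Measurable Ω Θ
      (MeasurableSpace.comap (fun ω => fun j => X1 j ω)
        (inferInstance : MeasurableSpace (Fin n → ∀ i, π i))) _ θhat1)
    (hθhat0_mem : ∀ ω, θhat0 ω ∈ Θ0) (hθhat1_mem : ∀ ω, θhat1 ω ∈ Θ0)
    (hθhat0_max : ∀ ω, ∀ θ ∈ Θ0,
      (∏ j : Fin n, compLik μ α β γ (p θ) (X0 j ω))
        ≤ ∏ j : Fin n, compLik μ α β γ (p (θhat0 ω)) (X0 j ω))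
    (hθhat1_max : ∀ ω, ∀ θ ∈ Θ0,
      (∏ j : Fin n, compLik μ α β γ (p θ) (X1 j ω))
        ≤ ∏ j : Fin n, compLik μ α β γ (p (θhat1 ω)) (X1 j ω))
    -- the DGP parameter lies in the null hypothesis set (Type I error regime)
    (hθstar : θstar ∈ Θ0)
    (a : ℝ) (ha0 : 0 < a) (ha1 : a < 1) :
    Pr {ω | 1 / ENNReal.ofReal a < safeDiv
        (∏ j : Fin n, compLik μ α β γ (p (t1 fun j' => X1 j' ω)) (X0 j ω))
        (∏ j : Fin n, compLik μ α β γ (p (θhat0 ω)) (X0 j ω))}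
      ≤ ENNReal.ofReal a := by
  have : IsProbabilityMeasure ((Measure.pi μ).withDensity (p θstar)) :=
    isProbabilityMeasure_withDensity (hp_prob θstar)
  exact split_CLRT_type_I_error_general μ hp_meas hp_prob hα hβ hγ hγpos hX0
    (measurable_pi_lambda _ hX1) hlaw ht1 (fun ω => hθhat0_max ω θstar hθstar) _
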